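/- arXiv:1507.08981 — 10 statements merged into one kernel-verified Lean document; each statement's English description precedes it below -/
import Mathlib

section
/- Let M be a module over a commutative ring R, let φ : S(M) → S(M) ∪ {∅} be a function, let K ⊆ N be proper submodules of M, and define φ_K : S(M/K) → S(M/K) ∪ {∅} by φ_K(P/K) = (φ(P)+K)/K for submodules P containing K (with φ_K(P/K) = ∅ when φ(P) = ∅). If N is a φ-classical prime submodule of M, then N/K is a φ_K-classical prime submodule of M/K. -/
/-!
Since `K ≤ N`, the class of `x` lies in `N/K` exactly when `x ∈ N`. Also `0 ∈ K` gives
`φ(N) ⊆ φ(N) + K`, so a representative of an element outside `φ_K(N/K)` lies outside `φ(N)`.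
Hence the condition on `N/K` lifts to representatives in `M`, where it holds by assumption.
-/

open Submodule Pointwise

/-- A proper submodule `N` of `M` is `φ`-classical prime if whenever `a, b ∈ R` and `m ∈ M`
with `abm ∈ N \ φ(N)`, then `am ∈ N` or `bm ∈ N`. -/
def PhiClassicalPrime {R M : Type*} [CommRing R] [AddCommGroup M] [Module R M]
    (φ : Submodule R M → Set M) (N : Submodule R M) : Prop :=
  N ≠ ⊤ ∧ ∀ (a b : R) (m : M), a • b • m ∈ N → a • b • m ∉ φ N →
    a • m ∈ N ∨ b • m ∈ N

/-- If `N` is a `φ`-classical prime submodule of `M` and `K ⊆ N` are proper submodules,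
then `N/K` is a `φ_K`-classical prime submodule of `M/K`, where
`φ_K(P/K) = (φ(P) + K)/K` for every submodule `P ⊇ K`. -/
theorem quotient_phiClassicalPrime {R M : Type*} [CommRing R] [AddCommGroup M] [Module R M]
    (φ : Submodule R M → Set M) (K N : Submodule R M)
    (hKN : K ≤ N) (hK : K ≠ ⊤) (hN : N ≠ ⊤)
    (φK : Submodule R (M ⧸ K) → Set (M ⧸ K))
    (hφK : ∀ P : Submodule R M, K ≤ P →
      φK (P.map K.mkQ) = K.mkQ '' (φ P + (K : Set M)))
    (h : PhiClassicalPrime φ N) :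
    PhiClassicalPrime φK (N.map K.mkQ) := by
  have mem_iff : ∀ x : M, K.mkQ x ∈ N.map K.mkQ ↔ x ∈ N := fun x => by
    rw [← Submodule.mem_comap, Submodule.comap_map_mkQ, sup_eq_right.mpr hKN]
  refine ⟨fun htop => hN ?_, fun a b y hy hyφ => ?_⟩
  · exact Submodule.eq_top_iff'.mpr fun x => (mem_iff x).mp (htop ▸ Submodule.mem_top)
  · obtain ⟨m, rfl⟩ := K.mkQ_surjective y
    simp only [← map_smul, mem_iff] at hy hyφ ⊢
    refine h.2 a b m hy fun hφ => hyφ ?_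
    rw [hφK N hKN]
    exact ⟨a • b • m, ⟨a • b • m, hφ, 0, K.zero_mem, add_zero _⟩, rfl⟩
end

section
/- Let M be a module over a commutative ring R, let φ : S(M) → S(M) ∪ {∅} be a function, and let K ⊆ N be proper submodules of M with φ(K) ⊆ φ(N). If K is a φ-classical prime submodule of M and N/K is a weakly classical prime submodule of M/K, then N is a φ-classical prime submodule of M. -/
/-!
Given `abm ∈ N \ φ(N)`, split on whether `abm` lies in `K`. If it does, then `φ(K) ⊆ φ(N)` gives
`abm ∈ K \ φ(K)`, and the hypothesis on `K ⊆ N` applies. If it does not, its class in `M/K` is a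
nonzero element of `N/K`, and the hypothesis on `N/K` applies; since `K ⊆ N`, membership of a class
in `N/K` is the same as membership of a representative in `N`.
-/

open Submodule

/-- A proper submodule `N` of `M` is weakly classical prime if whenever `a, b ∈ R` and `m ∈ M`
with `0 ≠ abm ∈ N`, then `am ∈ N` or `bm ∈ N`. -/
def WeaklyClassicalPrime {R M : Type*} [CommRing R] [AddCommGroup M] [Module R M]
    (N : Submodule R M) : Prop :=
  N ≠ ⊤ ∧ ∀ (a b : R) (m : M), a • b • m ∈ N → a • b • m ≠ 0 →
    a • m ∈ N ∨ b • m ∈ N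

/-- Let `K ⊆ N` be proper submodules of `M` with `φ(K) ⊆ φ(N)`. If `K` is a `φ`-classical
prime submodule of `M` and `N/K` is a weakly classical prime submodule of `M/K`, then `N` is
a `φ`-classical prime submodule of `M`. -/
theorem phiClassicalPrime_of_quotient {R M : Type*} [CommRing R] [AddCommGroup M] [Module R M]
    (φ : Submodule R M → Set M) (K N : Submodule R M)
    (hKN : K ≤ N) (hN : N ≠ ⊤) (hφ : φ K ⊆ φ N)
    (hK : PhiClassicalPrime φ K)
    (hNK : WeaklyClassicalPrime (N.map K.mkQ)) :
    PhiClassicalPrime φ N := by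
  have mem_iff (x : M) : K.mkQ x ∈ N.map K.mkQ ↔ x ∈ N := by
    rw [← mem_comap, comap_map_mkQ, sup_eq_right.mpr hKN]
  refine ⟨hN, fun a b m hm hφm => ?_⟩
  by_cases h : a • b • m ∈ K
  · exact (hK.2 a b m h fun h' => hφm (hφ h')).imp (@hKN _) (@hKN _)
  · have h0 : a • b • K.mkQ m ≠ 0 := by
      rw [← map_smul, ← map_smul]
      exact fun h' => h ((Quotient.mk_eq_zero K).mp h')
    have := hNK.2 a b (K.mkQ m) (by rwa [← map_smul, ← map_smul, mem_iff]) h0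
    rwa [← map_smul, ← map_smul, mem_iff, mem_iff] at this
end

section
/- Let M be a module over a commutative ring R, let N be a proper submodule of M, and let φ : S(M) → S(M) ∪ {∅} be a function such that φ(N) is a submodule of M contained in N. Then N is a φ-classical prime submodule of M if and only if N/φ(N) is a weakly classical prime submodule of M/φ(N). -/
open Submodule

/-- Let `N` be a proper submodule of `M` and suppose `φ(N)` is a submodule `P` of `M`
contained in `N`. Then `N` is a `φ`-classical prime submodule of `M` if and only if
`N/φ(N)` is a weakly classical prime submodule of `M/φ(N)`. -/
theorem phiClassicalPrime_iff_quotient_weaklyClassicalPrime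
    {R M : Type*} [CommRing R] [AddCommGroup M] [Module R M]
    (φ : Submodule R M → Set M) (N P : Submodule R M)
    (hN : N ≠ ⊤) (hP : (P : Set M) = φ N) (hPN : P ≤ N) :
    PhiClassicalPrime φ N ↔ WeaklyClassicalPrime (N.map P.mkQ) := by
  -- `N` is saturated under `M → M ⧸ P` because `P ≤ N`.
  have mem (x : M) : P.mkQ x ∈ N.map P.mkQ ↔ x ∈ N := by
    rw [← Submodule.mem_comap, Submodule.comap_map_mkQ, sup_eq_right.mpr hPN]
  have zero (x : M) : P.mkQ x = 0 ↔ x ∈ φ N := by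
    rw [← hP, SetLike.mem_coe, Submodule.mkQ_apply, Submodule.Quotient.mk_eq_zero]
  have proper : N.map P.mkQ ≠ ⊤ := fun h =>
    hN (eq_top_iff.mpr fun x _ => (mem x).mp (h ▸ Submodule.mem_top))
  -- Every element of `M ⧸ P` lifts to `M`, and under `mem` and `zero` the two conditions on lifts
  -- coincide.
  simp only [PhiClassicalPrime, WeaklyClassicalPrime, ne_eq, hN, proper, not_false_eq_true,
    true_and, P.mkQ_surjective.forall, ← map_smul, mem, zero]
end

section
/- Let M be a module over a commutative ring R, let N be a proper submodule of M, and let φ : S(M) → S(M) ∪ {∅} and ψ : J(R) → J(R) ∪ {∅} be functions. If N is a φ-classical prime submodule of M, then for every m ∈ M \ N with (φ(N) :_R m) ⊆ ψ((N :_R m)), the ideal (N :_R m) is a ψ-prime ideal of R. -/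
open Submodule

/-- A proper ideal `I` of `R` is `ψ`-prime if whenever `a, b ∈ R` with `ab ∈ I \ ψ(I)`,
then `a ∈ I` or `b ∈ I`. -/
def PsiPrime {R : Type*} [CommRing R] (ψ : Ideal R → Set R) (I : Ideal R) : Prop :=
  I ≠ ⊤ ∧ ∀ a b : R, a * b ∈ I → a * b ∉ ψ I → a ∈ I ∨ b ∈ I

/-- If `N` is a `φ`-classical prime submodule of `M`, then `(N :_R m)` is a `ψ`-prime ideal
of `R` for every `m ∈ M \ N` satisfying `(φ(N) :_R m) ⊆ ψ((N :_R m))`. -/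
theorem colon_psiPrime_of_phiClassicalPrime
    {R M : Type*} [CommRing R] [AddCommGroup M] [Module R M]
    (φ : Submodule R M → Set M) (ψ : Ideal R → Set R)
    (N : Submodule R M) (h : PhiClassicalPrime φ N) (m : M) (hm : m ∉ N)
    (hψ : {r : R | r • m ∈ φ N} ⊆ ψ (N.comap (LinearMap.toSpanSingleton R M m))) :
    PsiPrime ψ (N.comap (LinearMap.toSpanSingleton R M m)) := by
  refine ⟨fun htop => hm ?_, fun a b hab hnot => ?_⟩
  · simpa using (Ideal.eq_top_iff_one _).mp htop
  · simp only [Submodule.mem_comap, LinearMap.toSpanSingleton_apply] at hab ⊢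
    -- Contrapositive of `hψ`: since `ab ∉ ψ (N :_R m)`, also `abm ∉ φ N`.
    have hφ : (a * b) • m ∉ φ N := fun hmem => hnot (hψ hmem)
    rw [mul_smul] at hab hφ
    exact h.2 a b m hab hφ
end

section
/- Let M be a cyclic module over a commutative ring R, let φ : S(M) → S(M) ∪ {∅} be a function, and let N be a proper submodule of M. Then N is a φ-prime submodule of M if and only if N is a φ-classical prime submodule of M. -/
/-!
A `φ`-prime submodule is `φ`-classical prime over any module: apply the `φ`-prime condition to
`a • (b • m)`. Conversely, if `g` generates `M`, every `m` is `r • g`, so the classical condition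
for `a • r • g` gives `m ∈ N` or `a • g ∈ N`; the latter means `a • M ⊆ N`, as `M` is generated
by `g`.
-/

open Submodule

/-- A proper submodule `N` of `M` is `φ`-prime if whenever `a ∈ R` and `m ∈ M` with
`am ∈ N \ φ(N)`, then `m ∈ N` or `a ∈ (N :_R M)`. -/
def PhiPrime {R M : Type*} [CommRing R] [AddCommGroup M] [Module R M]
    (φ : Submodule R M → Set M) (N : Submodule R M) : Prop :=
  N ≠ ⊤ ∧ ∀ (a : R) (m : M), a • m ∈ N → a • m ∉ φ N →
    m ∈ N ∨ ∀ x : M, a • x ∈ N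

/-- In a cyclic `R`-module `M`, a proper submodule `N` is a `φ`-prime submodule if and only
if it is a `φ`-classical prime submodule. -/
theorem phiPrime_iff_phiClassicalPrime_of_cyclic
    {R M : Type*} [CommRing R] [AddCommGroup M] [Module R M]
    (hcyc : ∃ m : M, Submodule.span R {m} = ⊤)
    (φ : Submodule R M → Set M) (N : Submodule R M) (hN : N ≠ ⊤) :
    PhiPrime φ N ↔ PhiClassicalPrime φ N := by
  obtain ⟨g, hg⟩ := hcyc
  have hgen : ∀ x : M, ∃ r : R, r • g = x := fun x =>
    Submodule.mem_span_singleton.mp (hg ▸ Submodule.mem_top)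
  constructor
  · rintro ⟨-, h⟩
    refine ⟨hN, fun a b m hm hφ => ?_⟩
    exact (h a (b • m) hm hφ).symm.imp_left fun ha => ha m
  · rintro ⟨-, h⟩
    refine ⟨hN, fun a m hm hφ => ?_⟩
    -- Writing `m = r • g`, the classical condition applies to `a • r • g`,
    -- and `a • g ∈ N` forces `a • M ⊆ N` because `g` generates `M`.
    obtain ⟨r, rfl⟩ := hgen m
    refine (h a r g hm hφ).symm.imp_right fun ha x => ?_
    obtain ⟨s, rfl⟩ := hgen x
    rw [smul_comm]
    exact N.smul_mem s ha
end

section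
/- Let f : M → M' be a surjective homomorphism of modules over a commutative ring R, and let φ : S(M) → S(M) ∪ {∅} and φ' : S(M') → S(M') ∪ {∅} be functions. If N' is a φ'-classical prime submodule of M' and φ(f⁻¹(N')) = f⁻¹(φ'(N')), then f⁻¹(N') is a φ-classical prime submodule of M. -/
open Submodule

/-- Let `f : M → M'` be a surjective `R`-module homomorphism. If `N'` is a `φ'`-classical
prime submodule of `M'` and `φ(f⁻¹(N')) = f⁻¹(φ'(N'))`, then `f⁻¹(N')` is a `φ`-classical
prime submodule of `M`. -/
theorem comap_phiClassicalPrime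
    {R M M' : Type*} [CommRing R] [AddCommGroup M] [Module R M]
    [AddCommGroup M'] [Module R M']
    (f : M →ₗ[R] M') (hf : Function.Surjective f)
    (φ : Submodule R M → Set M) (φ' : Submodule R M' → Set M')
    (N' : Submodule R M') (h : PhiClassicalPrime φ' N')
    (hcomm : φ (N'.comap f) = f ⁻¹' (φ' N')) :
    PhiClassicalPrime φ (N'.comap f) := by
  refine ⟨fun htop => h.1 ?_, fun a b m hm hn => ?_⟩
  · rw [eq_top_iff]
    intro y _
    obtain ⟨x, rfl⟩ := hf y
    have hx : x ∈ N'.comap f := htop ▸ mem_top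
    exact hx
  · rw [hcomm] at hn
    simp only [Set.mem_preimage, mem_comap, map_smul] at hm hn ⊢
    exact h.2 a b (f m) hm hn
end

section
/- Let f : M → M' be a surjective homomorphism of modules over a commutative ring R, and let φ : S(M) → S(M) ∪ {∅} and φ' : S(M') → S(M') ∪ {∅} be functions. If N is a φ-classical prime submodule of M containing Ker(f) and φ'(f(N)) = f(φ(N)), then f(N) is a φ'-classical prime submodule of M'. -/
open Submodule

/-- Let `f : M → M'` be a surjective `R`-module homomorphism. If `N` is a `φ`-classical
prime submodule of `M` containing `Ker(f)` and `φ'(f(N)) = f(φ(N))`, then `f(N)` is a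
`φ'`-classical prime submodule of `M'`. -/
theorem map_phiClassicalPrime
    {R M M' : Type*} [CommRing R] [AddCommGroup M] [Module R M]
    [AddCommGroup M'] [Module R M']
    (f : M →ₗ[R] M') (hf : Function.Surjective f)
    (φ : Submodule R M → Set M) (φ' : Submodule R M' → Set M')
    (N : Submodule R M) (h : PhiClassicalPrime φ N)
    (hker : LinearMap.ker f ≤ N)
    (hcomm : φ' (N.map f) = f '' (φ N)) :
    PhiClassicalPrime φ' (N.map f) := by
  -- Since `ker f ≤ N`, the preimage of `f(N)` is `N`, so membership in `f(N)` is tested upstairs.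
  have hmem : ∀ x, f x ∈ N.map f ↔ x ∈ N := fun x => by
    rw [← Submodule.mem_comap, Submodule.comap_map_eq_self hker]
  refine ⟨fun htop => h.1 ?_, fun a b m' hN hφ => ?_⟩
  · exact eq_top_iff.2 fun x _ => (hmem x).1 (htop ▸ Submodule.mem_top)
  · obtain ⟨m, rfl⟩ := hf m'
    simp only [← map_smul, hmem] at hN hφ ⊢
    -- If `abm ∈ φ(N)`, then `f(abm) ∈ f(φ(N)) = φ'(f(N))`, against the hypothesis on `abm'`.
    exact h.2 a b m hN fun hm => hφ (hcomm ▸ Set.mem_image_of_mem f hm)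
end

section
/- Let M be a module over a commutative ring R and let a ∈ R be such that aM ≠ M and (0 :_M a) ⊆ aM. Then aM is an almost classical prime submodule of M if and only if aM is a classical prime submodule of M. -/
/-!
Write `N = aM`. The point is that `(N : M) N = a (N : M) M ⊆ aN`. Suppose `bcm ∈ N` but
`bm, cm ∉ N`. Almost primeness forces `bcm ∈ (N : M) N`. Since `am ∈ N`, replacing `c` by
`c + a` keeps all three hypotheses, so also `b(c + a)m ∈ (N : M) N`. Subtracting,
`abm ∈ (N : M) N ⊆ aN`, say `abm = ay` with `y ∈ N`; then `bm - y ∈ (0 :_M a) ⊆ N`, so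
`bm ∈ N`, a contradiction.
-/

open Submodule

/-- A proper submodule `N` of `M` is classical prime if whenever `a, b ∈ R` and `m ∈ M`
with `abm ∈ N`, then `am ∈ N` or `bm ∈ N`. -/
def ClassicalPrime {R M : Type*} [CommRing R] [AddCommGroup M] [Module R M]
    (N : Submodule R M) : Prop :=
  N ≠ ⊤ ∧ ∀ (a b : R) (m : M), a • b • m ∈ N → a • m ∈ N ∨ b • m ∈ N

/-- A proper submodule `N` of `M` is almost classical prime if whenever `a, b ∈ R` and
`m ∈ M` with `abm ∈ N \ (N :_R M)N`, then `am ∈ N` or `bm ∈ N`. -/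
def AlmostClassicalPrime {R M : Type*} [CommRing R] [AddCommGroup M] [Module R M]
    (N : Submodule R M) : Prop :=
  N ≠ ⊤ ∧ ∀ (a b : R) (m : M), a • b • m ∈ N →
    a • b • m ∉ (N.colon (⊤ : Submodule R M)) • N → a • m ∈ N ∨ b • m ∈ N

theorem colon_smul_le_map_lsmul {R M : Type*} [CommRing R] [AddCommGroup M] [Module R M] (a : R) :
    ((Submodule.map (LinearMap.lsmul R M a) ⊤).colon (⊤ : Submodule R M)) •
        Submodule.map (LinearMap.lsmul R M a) ⊤ ≤
      Submodule.map (LinearMap.lsmul R M a) (Submodule.map (LinearMap.lsmul R M a) ⊤) := by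
  rw [Submodule.smul_le]
  rintro r hr _ ⟨k, -, rfl⟩
  exact ⟨r • k, Submodule.mem_colon.1 hr k trivial, smul_comm a r k⟩

/-- Let `a ∈ R` with `aM ≠ M` and `(0 :_M a) ⊆ aM`. Then `aM` is an almost classical prime
submodule of `M` if and only if it is a classical prime submodule of `M`. -/
theorem smul_top_almostClassicalPrime_iff_classicalPrime
    {R M : Type*} [CommRing R] [AddCommGroup M] [Module R M] (a : R)
    (h1 : Submodule.map (LinearMap.lsmul R M a) ⊤ ≠ ⊤)
    (h2 : ∀ m : M, a • m = 0 → m ∈ Submodule.map (LinearMap.lsmul R M a) ⊤) :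
    AlmostClassicalPrime (Submodule.map (LinearMap.lsmul R M a) ⊤) ↔
      ClassicalPrime (Submodule.map (LinearMap.lsmul R M a) ⊤) := by
  refine ⟨fun h => ⟨h1, fun b c m hbc => ?_⟩, fun h => ⟨h1, fun b c m hbc _ => h.2 b c m hbc⟩⟩
  have haM (x : M) : a • x ∈ Submodule.map (LinearMap.lsmul R M a) ⊤ := ⟨x, trivial, rfl⟩
  by_contra! hn
  obtain ⟨hb, hc⟩ := hn
  have hexp : b • (c + a) • m = b • c • m + a • b • m := by
    rw [add_smul, smul_add, smul_comm b a m]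
  have e1 := by_contra fun hx => (h.2 b c m hbc hx).elim hb hc
  have hca : (c + a) • m ∉ Submodule.map (LinearMap.lsmul R M a) ⊤ := by
    rwa [add_smul, Submodule.add_mem_iff_left _ (haM m)]
  have e2 := by_contra fun hx =>
    (h.2 b (c + a) m (hexp ▸ add_mem hbc (haM _)) hx).elim hb hca
  rw [hexp, Submodule.add_mem_iff_right _ e1] at e2
  obtain ⟨y, hy, hya⟩ := colon_smul_le_map_lsmul a e2
  have h0 : a • (b • m - y) = 0 := by
    rw [smul_sub, sub_eq_zero]
    exact hya.symm
  exact hb (by simpa using add_mem (h2 _ h0) hy)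
end

section
/- Let M be a module over a commutative ring R and let m₀ ∈ M be such that Rm₀ ≠ M and (0 :_R m₀) ⊆ (Rm₀ :_R M). If Rm₀ is an almost classical prime submodule of M, then Rm₀ is a 2-absorbing submodule of M. -/
/-!
Write `N = R m₀`. If `abm ∈ N` but `am, bm ∉ N`, the almost classical prime condition forces
`abm ∈ (N : M) N`, and it applies equally to `m + m₀`. Subtracting, `ab m₀ ∈ (N : M) N = (N : M) m₀`,
so `ab m₀ = r m₀` with `r ∈ (N : M)`. Then `ab - r` annihilates `m₀`, hence lies in `(N : M)`
by hypothesis, and so does `ab`.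
-/

open Submodule

/-- A proper submodule `N` of `M` is 2-absorbing if whenever `a, b ∈ R` and `m ∈ M` with
`abm ∈ N`, then `am ∈ N` or `bm ∈ N` or `ab ∈ (N :_R M)`. -/
def TwoAbsorbing {R M : Type*} [CommRing R] [AddCommGroup M] [Module R M]
    (N : Submodule R M) : Prop :=
  N ≠ ⊤ ∧ ∀ (a b : R) (m : M), a • b • m ∈ N →
    a • m ∈ N ∨ b • m ∈ N ∨ ∀ x : M, (a * b) • x ∈ N

/-- Let `m₀ ∈ M` with `Rm₀ ≠ M` and `(0 :_R m₀) ⊆ (Rm₀ :_R M)`. If `Rm₀` is an almost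
classical prime submodule of `M`, then it is a 2-absorbing submodule of `M`. -/
theorem twoAbsorbing_of_almostClassicalPrime_span_singleton
    {R M : Type*} [CommRing R] [AddCommGroup M] [Module R M] (m₀ : M)
    (h1 : Submodule.span R {m₀} ≠ ⊤)
    (h2 : ∀ r : R, r • m₀ = 0 → ∀ x : M, r • x ∈ Submodule.span R {m₀})
    (h : AlmostClassicalPrime (Submodule.span R {m₀})) :
    TwoAbsorbing (Submodule.span R {m₀}) := by
  refine ⟨h1, fun a b m hm => ?_⟩
  by_contra! hcon
  obtain ⟨ha, hb, x, hx⟩ := hcon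
  have hm₀ : ∀ c : R, c • m₀ ∈ Submodule.span R {m₀} := fun c =>
    Submodule.smul_mem _ c (Submodule.mem_span_singleton_self m₀)
  have key : ∀ n : M, a • b • n ∈ Submodule.span R {m₀} → a • n ∉ Submodule.span R {m₀} →
      b • n ∉ Submodule.span R {m₀} →
      a • b • n ∈ ((Submodule.span R {m₀}).colon (⊤ : Submodule R M)) •
        Submodule.span R {m₀} := by
    intro n hn han hbn
    by_contra hnot
    exact (h.2 a b n hn hnot).elim han hbn
  have e1 := key m hm ha hb
  -- Translating by `m₀ ∈ N` preserves the three conditions on `m`.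
  have e2 := key (m + m₀)
    (by
      rw [smul_add, smul_add]
      exact add_mem hm (by rw [smul_smul]; exact hm₀ _))
    (by rwa [smul_add, Submodule.add_mem_iff_left _ (hm₀ a)])
    (by rwa [smul_add, Submodule.add_mem_iff_left _ (hm₀ b)])
  rw [smul_add, smul_add, Submodule.add_mem_iff_right _ e1,
    Submodule.mem_smul_span_singleton] at e2
  obtain ⟨r, hr, hrm⟩ := e2
  have hd := h2 (a * b - r) (by rw [sub_smul, hrm, mul_smul, sub_self]) x
  have hrx : r • x ∈ Submodule.span R {m₀} := Submodule.mem_colon.1 hr x trivial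
  apply hx
  rw [sub_smul] at hd
  exact (Submodule.sub_mem_iff_left _ hrx).1 hd
end

section
/- Let M be a module over a commutative ring R, let φ : S(M) → S(M) ∪ {∅} be a function, and let N be a φ-classical prime submodule of M. Suppose abK ⊆ N for some a, b ∈ R and some submodule K of M. If for every k ∈ K the triple (a,b,k) is not a φ-classical triple-zero of N, then aK ⊆ N or bK ⊆ N. -/
open Submodule

/-- `(a, b, m)` is a `φ`-classical triple-zero of `N` if `abm ∈ φ(N)`, `am ∉ N` and
`bm ∉ N`. -/
def PhiClassicalTripleZero {R M : Type*} [CommRing R] [AddCommGroup M] [Module R M]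
    (φ : Submodule R M → Set M) (N : Submodule R M) (a b : R) (m : M) : Prop :=
  a • b • m ∈ φ N ∧ a • m ∉ N ∧ b • m ∉ N

/-- Let `N` be a `φ`-classical prime submodule of `M` and suppose `abK ⊆ N` for some
`a, b ∈ R` and some submodule `K` of `M`. If `(a, b, k)` is not a `φ`-classical triple-zero
of `N` for every `k ∈ K`, then `aK ⊆ N` or `bK ⊆ N`. -/
theorem smul_le_of_no_tripleZero
    {R M : Type*} [CommRing R] [AddCommGroup M] [Module R M]
    (φ : Submodule R M → Set M) (N : Submodule R M)
    (h : PhiClassicalPrime φ N) (a b : R) (K : Submodule R M)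
    (habK : ∀ k ∈ K, a • b • k ∈ N)
    (htz : ∀ k ∈ K, ¬ PhiClassicalTripleZero φ N a b k) :
    (∀ k ∈ K, a • k ∈ N) ∨ ∀ k ∈ K, b • k ∈ N := by
  -- Each `k ∈ K` lies in `a⁻¹N ∪ b⁻¹N`: otherwise `abk ∉ φ N` by `htz`, and `h` applies.
  have key : ∀ k ∈ K, a • k ∈ N ∨ b • k ∈ N := by
    intro k hk
    by_cases hφ : a • b • k ∈ φ N
    · by_contra hc
      rw [not_or] at hc
      exact htz k hk ⟨hφ, hc.1, hc.2⟩
    · exact h.2 a b k (habK k hk) hφ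
  by_contra! hc
  obtain ⟨⟨x, hx, hax⟩, y, hy, hby⟩ := hc
  have hbx : b • x ∈ N := (key x hx).resolve_left hax
  have hay : a • y ∈ N := (key y hy).resolve_right hby
  -- As for a group covered by two subgroups, `x + y` lies in neither preimage.
  rcases key (x + y) (K.add_mem hx hy) with hxy | hxy <;> rw [smul_add] at hxy
  · exact hax ((N.add_mem_iff_left hay).1 hxy)
  · exact hby ((N.add_mem_iff_right hbx).1 hxy)
end
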